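/- arXiv:2505.17523 — 2 statements merged into one kernel-verified Lean document; each statement's English description precedes it below -/
import Mathlib

section
/- For every subset T ⊆ 𝔹, the cones 𝒟′_T and 𝒟_T coincide: 𝒟′_T = 𝒟_T. -/
/- Setting: `B` is the finite nonempty set 𝔹 equipped with a permutation `σ` (Frobenius),
and `p` is a prime.  Weights live in `ℚ^𝔹 = (B → ℚ)`.  The orbits `𝔹_𝔭` of `σ` are the sets
`orbit σ β`, and for `T ⊆ 𝔹` we have `T_𝔭 = T ∩ orbit σ β`. -/

open scoped Classical

noncomputable section

namespace GO

variable {B : Type*} [Fintype B] [DecidableEq B]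

/-- The standard basis vector `e_β` of `ℚ^𝔹`. -/
def e (β : B) : B → ℚ := fun τ => if τ = β then 1 else 0

/-- `β'` lies in the `σ`-orbit of `β`. -/
def sameOrbit (σ : Equiv.Perm B) (β β' : B) : Prop := ∃ n : ℕ, (σ ^ n) β = β'

/-- The `σ`-orbit `𝔹_𝔭` of `β`. -/
def orbit (σ : Equiv.Perm B) (β : B) : Set B := {τ | sameOrbit σ β τ}

/-- `|𝔹_𝔭|`, the cardinality of the orbit of `β`. -/
def orbitCard (σ : Equiv.Perm B) (β : B) : ℕ := (orbit σ β).ncard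

/-- For `β`, `β'` in the same orbit: the unique `n` with `0 < n ≤ |𝔹_𝔭|` and `σ^n β' = β`,
realized as the least positive `n` with `σ^n β' = β`. -/
def steps (σ : Equiv.Perm B) (β' β : B) : ℕ := sInf {n : ℕ | 0 < n ∧ (σ ^ n) β' = β}

/-- For `β`, `β'` in the same orbit: the unique `n` with `0 ≤ n < |𝔹_𝔭|` and `σ^n β = β'`. -/
def steps0 (σ : Equiv.Perm B) (β β' : B) : ℕ := sInf {n : ℕ | (σ ^ n) β = β'}

/-- `h_β^{β'} = -e_β + p^n e_{β'}` where `β = σ^n β'` with `0 < n ≤ |𝔹_𝔭|`. -/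
def hvec (σ : Equiv.Perm B) (p : ℕ) (β β' : B) : B → ℚ :=
  -(e β) + ((p : ℚ) ^ steps σ β' β) • e β'

/-- `b_β^{β'} = e_β + p^n e_{β'}` where `β = σ^n β'` with `0 < n ≤ |𝔹_𝔭|`. -/
def bvec (σ : Equiv.Perm B) (p : ℕ) (β β' : B) : B → ℚ :=
  (e β) + ((p : ℚ) ^ steps σ β' β) • e β'

/-- `h_β = -e_β + p e_{σ⁻¹ β}`. -/
def hsimple (σ : Equiv.Perm B) (p : ℕ) (β : B) : B → ℚ := -(e β) + (p : ℚ) • e (σ⁻¹ β)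

/-- `b_β = e_β + p e_{σ⁻¹ β}`. -/
def bsimple (σ : Equiv.Perm B) (p : ℕ) (β : B) : B → ℚ := (e β) + (p : ℚ) • e (σ⁻¹ β)

/-- The `ℚ^{≥0}`-cone generated by a set `S` of vectors: all finite nonnegative rational
linear combinations of elements of `S`. -/
def cone {V : Type*} [AddCommMonoid V] [Module ℚ V] (S : Set V) : Set V :=
  {x | ∃ (n : ℕ) (c : Fin n → ℚ) (v : Fin n → V),
    (∀ i, 0 ≤ c i) ∧ (∀ i, v i ∈ S) ∧ x = ∑ i, c i • v i}

/-- A chain in `T` (automatically contained in a single orbit, so this is the notion of a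
chain in `T_𝔭` for `T_𝔭 ⊊ 𝔹_𝔭`): `C = {σ^{-i}β : 0 ≤ i ≤ m} ⊆ T` with `σβ ∉ T` and
`σ^{-m-1}β ∉ T`. -/
def IsChainIn (σ : Equiv.Perm B) (T : Set B) (C : Set B) : Prop :=
  ∃ (β : B) (m : ℕ), σ β ∉ T ∧ (σ⁻¹ ^ (m + 1)) β ∉ T ∧
    (∀ i ≤ m, (σ⁻¹ ^ i) β ∈ T) ∧ C = {τ | ∃ i ≤ m, τ = (σ⁻¹ ^ i) β}

/-- `C̃` for a chain `C`: equals `C` if `m` is odd (i.e. `|C| = m+1` is even), and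
`C ∪ {σ^{-m-1}β} = C ∪ σ⁻¹(C)` if `m` is even (i.e. `|C|` odd). -/
def chainExt (σ : Equiv.Perm B) (C : Set B) : Set B :=
  if Odd C.ncard then C ∪ (⇑σ⁻¹ '' C) else C

/-- `T̃ = ⋃_𝔭 T̃_𝔭`: the union of `T` with the extensions `C̃` of all chains `C` in `T`.
(For orbits with `T_𝔭 = 𝔹_𝔭` there are no chains and `T̃_𝔭 = 𝔹_𝔭 = T_𝔭`.) -/
def tilde (σ : Equiv.Perm B) (T : Set B) : Set B :=
  T ∪ ⋃ (C : Set B) (_ : IsChainIn σ T C), chainExt σ C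

/-- `μ_β`: the least `i > 0` with `σ^i β ∉ T` if `T_𝔭 ≠ 𝔹_𝔭`, and `0` if `T_𝔭 = 𝔹_𝔭`. -/
def mu (σ : Equiv.Perm B) (T : Set B) (β : B) : ℕ :=
  if orbit σ β ⊆ T then 0 else sInf {i : ℕ | 0 < i ∧ (σ ^ i) β ∉ T}

/-- `n_β`: the least `i > 0` with `σ^i β ∉ T̃` (meaningful when `T̃_𝔭 ≠ 𝔹_𝔭`). -/
def nn (σ : Equiv.Perm B) (T : Set B) (β : B) : ℕ :=
  sInf {i : ℕ | 0 < i ∧ (σ ^ i) β ∉ tilde σ T}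

/-- `ν_β`: the least `i ≥ 0` with `σ^{-i} β ∉ T` (meaningful when `T_𝔭 ≠ 𝔹_𝔭`). -/
def nu (σ : Equiv.Perm B) (T : Set B) (β : B) : ℕ :=
  sInf {i : ℕ | (σ⁻¹ ^ i) β ∉ T}

/-- `𝒯(T_𝔭) = (𝔹_𝔭 − T̃_𝔭) ∪ σ(T̃_𝔭 − T_𝔭)`, taken globally (union over all `𝔭`). -/
def Tscr (σ : Equiv.Perm B) (T : Set B) : Set B :=
  (tilde σ T)ᶜ ∪ (⇑σ '' (tilde σ T \ T))

/-- The generating set `⋃_𝔭 𝒢(T_𝔭)`: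
`{h_β^{β'} : β ∈ ℋ(T_𝔭), β' ∈ 𝒯(T_𝔭)} ∪ {±b_β : β ∈ T_𝔭}` over all `𝔭`. -/
def Dgen (σ : Equiv.Perm B) (p : ℕ) (T : Set B) : Set (B → ℚ) :=
  {v | ∃ β β', β ∉ T ∧ β' ∈ Tscr σ T ∧ sameOrbit σ β β' ∧ v = hvec σ p β β'}
  ∪ {v | ∃ β ∈ T, v = bsimple σ p β ∨ v = -(bsimple σ p β)}

/-- The cone `𝒟_T`. -/
def D (σ : Equiv.Perm B) (p : ℕ) (T : Set B) : Set (B → ℚ) := cone (Dgen σ p T)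

/-- `h_{σ^{n_β}β}^{β} = -e_{σ^{n_β}β} + p^{n_β} e_β`. -/
def fH (σ : Equiv.Perm B) (p : ℕ) (T : Set B) (β : B) : B → ℚ :=
  -(e ((σ ^ nn σ T β) β)) + ((p : ℚ) ^ nn σ T β) • e β

/-- `b_{σ^{n_β}β}^{β} = e_{σ^{n_β}β} + p^{n_β} e_β`. -/
def fB (σ : Equiv.Perm B) (p : ℕ) (T : Set B) (β : B) : B → ℚ :=
  (e ((σ ^ nn σ T β) β)) + ((p : ℚ) ^ nn σ T β) • e β

/-- The generating set `⋃_𝔭 𝒢′(T_𝔭)`: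
if `𝔹_𝔭 − T̃_𝔭 ≠ ∅` it is `{h_{σ^{n_β}β}^β : β ∈ 𝔹_𝔭 − T̃_𝔭} ∪ {−b_{σ^{n_β}β}^β : β ∈ T̃_𝔭 − T_𝔭}
∪ {±b_β : β ∈ T_𝔭}`, and if `𝔹_𝔭 = T̃_𝔭` it is `{−e_β : β ∈ 𝔹_𝔭 − T_𝔭} ∪ {±b_β : β ∈ T_𝔭}`. -/
def D'gen (σ : Equiv.Perm B) (p : ℕ) (T : Set B) : Set (B → ℚ) :=
  {v | ∃ β, β ∉ tilde σ T ∧ v = fH σ p T β}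
  ∪ {v | ∃ β, β ∈ tilde σ T ∧ β ∉ T ∧ ¬ orbit σ β ⊆ tilde σ T ∧ v = -(fB σ p T β)}
  ∪ {v | ∃ β, β ∉ T ∧ orbit σ β ⊆ tilde σ T ∧ v = -(e β)}
  ∪ {v | ∃ β ∈ T, v = bsimple σ p β ∨ v = -(bsimple σ p β)}

/-- The cone `𝒟′_T`. -/
def D' (σ : Equiv.Perm B) (p : ℕ) (T : Set B) : Set (B → ℚ) := cone (D'gen σ p T)

/-- `f_β(T)` for `β ∉ T`: `h_{σ^{n_β}β}^β` if `β ∈ 𝔹_𝔭 − T̃_𝔭`; `−b_{σ^{n_β}β}^β` if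
`β ∈ T̃_𝔭 − T_𝔭` and `𝔹_𝔭 ≠ T̃_𝔭`; and `−(1+p^{|𝔹_𝔭|}) e_β` if `𝔹_𝔭 = T̃_𝔭`. -/
def fvec (σ : Equiv.Perm B) (p : ℕ) (T : Set B) (β : B) : B → ℚ :=
  if orbit σ β ⊆ tilde σ T then -((1 + (p : ℚ) ^ orbitCard σ β) • e β)
  else if β ∈ tilde σ T then -(fB σ p T β) else fH σ p T β

/-- `𝔹(T) = ⋃_𝔭 𝔹_𝔭(T)`: `β ∈ 𝔹(T)` iff `β ∉ T`, the set `𝔹_𝔭 − T̃_𝔭` is nonempty, and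
`𝔹_𝔭 − T̃_𝔭 ≠ {β}` (this encodes all three cases of the definition of `𝔹_𝔭(T)`). -/
def BT (σ : Equiv.Perm B) (T : Set B) : Set B :=
  {β | β ∉ T ∧ (orbit σ β \ tilde σ T).Nonempty ∧ orbit σ β \ tilde σ T ≠ {β}}

/-- The sign function `ε_T : 𝔹 → {−1,0,1}`. -/
def epsT (σ : Equiv.Perm B) (T : Set B) (β : B) : ℚ :=
  if orbit σ β ⊆ T then 0
  else if β ∈ tilde σ T then (-1 : ℚ) ^ (mu σ T β - 1) else 1

/-- `L^ε[β, β'](κ) = Σ_{0 ≤ i ≤ n} ε(σ^iβ) p^i k_{σ^iβ}`, where `β' = σ^n β` with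
`0 ≤ n < |𝔹_𝔭|`. -/
def Lfun (σ : Equiv.Perm B) (p : ℕ) (ε : B → ℚ) (β β' : B) (κ : B → ℚ) : ℚ :=
  ∑ i ∈ Finset.range (steps0 σ β β' + 1), ε ((σ ^ i) β) * (p : ℚ) ^ i * κ ((σ ^ i) β)

/-- `L^ε[β] = L^ε[β, σ⁻¹β]`. -/
def Lfun1 (σ : Equiv.Perm B) (p : ℕ) (ε : B → ℚ) (β : B) (κ : B → ℚ) : ℚ :=
  Lfun σ p ε β (σ⁻¹ β) κ

/-- `L_{T,β}` for `β ∈ 𝔹 − T`: `L^{ε_T}[σ^{μ_β}β]` if `β ∈ 𝔹 − T̃`, and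
`L^{ε_T}[β, σ^{μ_β−1}β]` if `β ∈ T̃ − T`. -/
def LT (σ : Equiv.Perm B) (p : ℕ) (T : Set B) (β : B) (κ : B → ℚ) : ℚ :=
  if β ∈ tilde σ T then Lfun σ p (epsT σ T) β ((σ ^ (mu σ T β - 1)) β) κ
  else Lfun1 σ p (epsT σ T) ((σ ^ mu σ T β) β) κ

/-- `ε_{T,f_β}`: negates `ε_T` on `{β, σβ, …, σ^{μ_β−1}β}`. -/
def epsTf (σ : Equiv.Perm B) (T : Set B) (β τ : B) : ℚ :=
  if ∃ i < mu σ T β, τ = (σ ^ i) β then -(epsT σ T τ) else epsT σ T τ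

/-- `L_{T,f_β,τ}` for `β ∈ 𝔹(T)` and `τ ∈ 𝔹 − (T ∪ {σ^{n_β}β})`, with `β′ = σ^{n_β}β` and
`β̃ = σ^{μ_{β′}}β′`. -/
def LTf (σ : Equiv.Perm B) (p : ℕ) (T : Set B) (β τ : B) (κ : B → ℚ) : ℚ :=
  if τ = β then
    (if β ∈ tilde σ T then
      Lfun1 σ p (epsTf σ T β) ((σ ^ mu σ T ((σ ^ nn σ T β) β)) ((σ ^ nn σ T β) β)) κ
    else
      Lfun σ p (epsTf σ T β) β (σ⁻¹ ((σ ^ mu σ T ((σ ^ nn σ T β) β)) ((σ ^ nn σ T β) β))) κ)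
  else
    (if τ ∈ tilde σ T then LT σ p T τ κ
     else Lfun1 σ p (epsTf σ T β) ((σ ^ mu σ T τ) τ) κ)

/-- `𝒟_{T,f_β} = {κ : L_{T,f_β,τ}(κ) ≥ 0 for all τ ∈ 𝔹 − (T ∪ {σ^{n_β}β})}`. -/
def Df (σ : Equiv.Perm B) (p : ℕ) (T : Set B) (β : B) : Set (B → ℚ) :=
  {κ | ∀ τ, τ ∉ T → τ ≠ (σ ^ nn σ T β) β → 0 ≤ LTf σ p T β τ κ}

/-- `i_T : ℚ^𝔹 → ℚ^{𝔹−T}`, the linear map with `i_T(e_β) = 0` if `T_𝔭 = 𝔹_𝔭` and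
`i_T(e_β) = (−p)^{ν_β} e_{σ^{−ν_β}β}` otherwise. -/
def iT (σ : Equiv.Perm B) (p : ℕ) (T : Set B) (κ : B → ℚ) : {β : B // β ∉ T} → ℚ :=
  fun β₀ => ∑ β : B, κ β *
    (if orbit σ β ⊆ T then 0
     else if (σ⁻¹ ^ nu σ T β) β = β₀.1 then (-(p : ℚ)) ^ nu σ T β else 0)

/-- Restriction to `ℚ^{𝔹−T}` of a vector of `ℚ^𝔹` (used for vectors supported on `𝔹 − T`). -/
def res (T : Set B) (v : B → ℚ) : {β : B // β ∉ T} → ℚ := fun β => v β.1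

/-- The generating set `𝒢^{T-red}(T) = ⋃_𝔭 𝒢_𝔭^{T-red}(T)` of the reduced cone. -/
def Gred (σ : Equiv.Perm B) (p : ℕ) (T : Set B) : Set ({β : B // β ∉ T} → ℚ) :=
  {v | ∃ β, β ∉ tilde σ T ∧ v = res T (fH σ p T β)}
  ∪ {v | ∃ β, β ∈ tilde σ T ∧ β ∉ T ∧ ¬ orbit σ β ⊆ tilde σ T ∧ v = res T (-(fB σ p T β))}
  ∪ {v | ∃ β, β ∉ T ∧ orbit σ β ⊆ tilde σ T ∧ v = res T (-(e β))}

/-- The minimal cone `𝒞^min_T = i_T(𝒟_T ∩ ⋂_{β ∈ 𝔹(T)} 𝒟_{T,f_β}) ⊆ ℚ^{𝔹−T}`. -/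
def Cmin (σ : Equiv.Perm B) (p : ℕ) (T : Set B) : Set ({β : B // β ∉ T} → ℚ) :=
  iT σ p T '' (D σ p T ∩ {κ | ∀ β ∈ BT σ T, κ ∈ Df σ p T β})

/-- `g_β`: `b_β` if `β ∈ T_𝔭`; `−e_β` if `β ∈ T̃_𝔭 − T_𝔭` and `𝔹_𝔭 = T̃_𝔭`;
`−b_{σ^{n_β}β}^β` if `β ∈ T̃_𝔭 − T_𝔭` and `𝔹_𝔭 ≠ T̃_𝔭`; `h_{σ^{n_β}β}^β` if `β ∈ 𝔹_𝔭 − T̃_𝔭`. -/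
def gvec (σ : Equiv.Perm B) (p : ℕ) (T : Set B) (β : B) : B → ℚ :=
  if β ∈ T then bsimple σ p β
  else if orbit σ β ⊆ tilde σ T then -(e β)
  else if β ∈ tilde σ T then -(fB σ p T β)
  else fH σ p T β

/-- The map `σ̄ : β ↦ σ^{n_β} β`. -/
def sigbar (σ : Equiv.Perm B) (T : Set B) (β : B) : B := (σ ^ nn σ T β) β

/-- `h_β = -e_β + p e_{σ⁻¹β}` as an element of `ℤ^𝔹`. -/
def hZ (σ : Equiv.Perm B) (p : ℕ) (β : B) : B → ℤ :=
  fun τ => (if τ = β then -1 else 0) + (if τ = σ⁻¹ β then (p : ℤ) else 0)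

end GO

end

namespace GO

theorem cone_zero {V : Type*} [AddCommMonoid V] [Module ℚ V] (S : Set V) : (0 : V) ∈ cone S :=
  ⟨0, Fin.elim0, Fin.elim0, fun i => i.elim0, fun i => i.elim0, by simp⟩

theorem cone_gen {V : Type*} [AddCommMonoid V] [Module ℚ V] {S : Set V} {x : V} (h : x ∈ S) :
    x ∈ cone S :=
  ⟨1, fun _ => 1, fun _ => x, fun _ => zero_le_one, fun _ => h, by simp⟩

theorem cone_smul {V : Type*} [AddCommMonoid V] [Module ℚ V] {S : Set V} {x : V} (a : ℚ)
    (ha : 0 ≤ a) (h : x ∈ cone S) : a • x ∈ cone S := by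
  obtain ⟨n, c, v, hc, hv, rfl⟩ := h
  exact ⟨n, fun i => a * c i, v, fun i => mul_nonneg ha (hc i), hv, by
    simp [Finset.smul_sum, mul_smul]⟩

theorem cone_add {V : Type*} [AddCommMonoid V] [Module ℚ V] {S : Set V} {x y : V}
    (hx : x ∈ cone S) (hy : y ∈ cone S) : x + y ∈ cone S := by
  obtain ⟨n, c, v, hc, hv, rfl⟩ := hx
  obtain ⟨m, d, w, hd, hw, rfl⟩ := hy
  refine ⟨n + m, Fin.append c d, Fin.append v w, ?_, ?_, ?_⟩
  · intro i
    refine Fin.addCases (fun i => ?_) (fun i => ?_) i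
    · simpa using hc i
    · simpa using hd i
  · intro i
    refine Fin.addCases (fun i => ?_) (fun i => ?_) i
    · simpa using hv i
    · simpa using hw i
  · simp [Fin.sum_univ_add]

theorem cone_sub {V : Type*} [AddCommMonoid V] [Module ℚ V] {S S' : Set V}
    (h : ∀ x ∈ S, x ∈ cone S') : cone S ⊆ cone S' := by
  rintro x ⟨n, c, v, hc, hv, rfl⟩
  have : ∀ s : Finset (Fin n), ∑ i ∈ s, c i • v i ∈ cone S' := by
    intro s
    induction s using Finset.induction_on with
    | empty => simpa using cone_zero S'
    | insert a s ha ih =>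
      rw [Finset.sum_insert ha]
      exact cone_add (cone_smul _ (hc a) (h _ (hv a))) ih
  exact this _

section
set_option linter.unusedSectionVars false
variable {B : Type*} [Fintype B] [DecidableEq B]

theorem inv_self_app (σ : Equiv.Perm B) (x : B) : σ⁻¹ (σ x) = x := by simp

theorem tilde_succ {σ : Equiv.Perm B} {T : Set B} {γ : B} (h : γ ∈ tilde σ T) (hT : γ ∉ T) :
    σ γ ∈ T := by
  rcases h with h | h
  · exact absurd h hT
  simp only [Set.mem_iUnion] at h
  obtain ⟨C, hC, h⟩ := h
  obtain ⟨β, m, -, -, hm, rfl⟩ := hC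
  have key : ∀ τ ∈ {τ | ∃ i ≤ m, τ = (σ⁻¹ ^ i) β}, τ ∈ T := by
    rintro τ ⟨i, hi, rfl⟩; exact hm i hi
  unfold chainExt at h
  split_ifs at h
  · rcases h with h | ⟨τ, hτ, rfl⟩
    · exact absurd (key _ h) hT
    · simpa using key _ hτ
  · exact absurd (key _ h) hT

theorem sub_tilde {σ : Equiv.Perm B} {T : Set B} {γ : B} (h : γ ∉ tilde σ T) : γ ∉ T :=
  fun h' => h (Or.inl h')

theorem steps_spec {σ : Equiv.Perm B} {β' β : B} (h : sameOrbit σ β β') :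
    0 < steps σ β' β ∧ (σ ^ steps σ β' β) β' = β := by
  obtain ⟨n, rfl⟩ := h
  have hne : {k : ℕ | 0 < k ∧ (σ ^ k) ((σ ^ n) β) = β}.Nonempty := by
    have ho : 0 < orderOf σ := orderOf_pos σ
    refine ⟨orderOf σ * (n + 1) - n, ?_, ?_⟩
    · have : n + 1 ≤ orderOf σ * (n + 1) := Nat.le_mul_of_pos_left _ ho
      omega
    · have : n + 1 ≤ orderOf σ * (n + 1) := Nat.le_mul_of_pos_left _ ho
      rw [← Equiv.Perm.mul_apply, ← pow_add, Nat.sub_add_cancel (by omega), pow_mul,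
        pow_orderOf_eq_one]
      simp
  exact Nat.sInf_mem hne

theorem sameOrbit_symm {σ : Equiv.Perm B} {β' β : B} (h : sameOrbit σ β β') :
    sameOrbit σ β' β := ⟨_, (steps_spec h).2⟩

theorem sameOrbit_trans {σ : Equiv.Perm B} {a b c : B} (h : sameOrbit σ a b)
    (h' : sameOrbit σ b c) : sameOrbit σ a c := by
  obtain ⟨n, rfl⟩ := h
  obtain ⟨m, rfl⟩ := h'
  exact ⟨m + n, by rw [pow_add, Equiv.Perm.mul_apply]⟩

theorem nn_spec' {σ : Equiv.Perm B} {T : Set B} {γ : B} {k : ℕ} (hk : 0 < k)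
    (h : (σ ^ k) γ ∉ tilde σ T) :
    0 < nn σ T γ ∧ (σ ^ nn σ T γ) γ ∉ tilde σ T ∧ nn σ T γ ≤ k := by
  have h1 : k ∈ {i : ℕ | 0 < i ∧ (σ ^ i) γ ∉ tilde σ T} := ⟨hk, h⟩
  have h2 := Nat.sInf_mem ⟨k, h1⟩
  exact ⟨h2.1, h2.2, Nat.sInf_le h1⟩

theorem nn_spec {σ : Equiv.Perm B} {T : Set B} {γ : B} (h : ¬ orbit σ γ ⊆ tilde σ T) :
    0 < nn σ T γ ∧ (σ ^ nn σ T γ) γ ∉ tilde σ T := by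
  obtain ⟨τ, hτ, hn⟩ := Set.not_subset.1 h
  obtain ⟨h1, h2⟩ := steps_spec (sameOrbit_symm hτ)
  have := nn_spec' (T := T) h1 (by rwa [h2])
  exact ⟨this.1, this.2.1⟩

theorem orbit_self {σ : Equiv.Perm B} (γ : B) : sameOrbit σ γ γ := ⟨0, rfl⟩

theorem not_orbit {σ : Equiv.Perm B} {T : Set B} {γ : B} (h : γ ∉ tilde σ T) :
    ¬ orbit σ γ ⊆ tilde σ T := fun h' => h (h' (orbit_self γ))

theorem nn_le {σ : Equiv.Perm B} {T : Set B} {γ : B} {k : ℕ} (hk : 0 < k)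
    (h : (σ ^ k) γ ∉ tilde σ T) : nn σ T γ ≤ k := (nn_spec' hk h).2.2

/-- D' ⊆ D on generators -/
theorem gen1 (σ : Equiv.Perm B) (p : ℕ) (T : Set B) (x : B → ℚ) (hx : x ∈ D'gen σ p T) :
    x ∈ cone (Dgen σ p T) := by
  rcases hx with ((⟨γ, hγ, rfl⟩ | ⟨γ, hγ, hT, ho, rfl⟩) | ⟨β, hT, ho, rfl⟩) | h
  · obtain ⟨h0, h1⟩ := nn_spec (not_orbit hγ)
    apply cone_gen
    have hs : sameOrbit σ ((σ ^ nn σ T γ) γ) γ := sameOrbit_symm ⟨_, rfl⟩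
    refine Or.inl ⟨(σ ^ nn σ T γ) γ, γ, sub_tilde h1, Or.inl hγ, hs, ?_⟩
    obtain ⟨s0, s1⟩ := steps_spec hs
    have e1 : steps σ γ ((σ ^ nn σ T γ) γ) = nn σ T γ := by
      apply le_antisymm
      · exact Nat.sInf_le ⟨h0, rfl⟩
      · exact nn_le s0 (by rwa [s1])
    simp only [fH, hvec, e1]
  · obtain ⟨h0, h1⟩ := nn_spec ho
    have hσ := tilde_succ hγ hT
    have hs : sameOrbit σ ((σ ^ nn σ T γ) γ) (σ γ) :=
      sameOrbit_trans (sameOrbit_symm ⟨_, rfl⟩) ⟨1, by simp⟩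
    obtain ⟨s0, s1⟩ := steps_spec hs
    have hn1 : nn σ T γ ≠ 1 := by
      intro h; rw [h] at h1; exact h1 (Or.inl (by simpa using hσ))
    have e1 : steps σ (σ γ) ((σ ^ nn σ T γ) γ) + 1 = nn σ T γ := by
      apply le_antisymm
      · have : steps σ (σ γ) ((σ ^ nn σ T γ) γ) ≤ nn σ T γ - 1 := by
          refine Nat.sInf_le ⟨by omega, ?_⟩
          rw [← Equiv.Perm.mul_apply, ← pow_succ, Nat.sub_add_cancel h0]
        omega
      · refine nn_le (by omega) ?_
        rw [pow_succ, Equiv.Perm.mul_apply, s1]; exact h1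
    have g1 : hvec σ p ((σ ^ nn σ T γ) γ) (σ γ) ∈ cone (Dgen σ p T) :=
      cone_gen (Or.inl ⟨_, _, sub_tilde h1, Or.inr ⟨γ, ⟨hγ, hT⟩, rfl⟩, hs, rfl⟩)
    have g2 : -(bsimple σ p (σ γ)) ∈ cone (Dgen σ p T) :=
      cone_gen (Or.inr ⟨_, hσ, Or.inr rfl⟩)
    have := cone_add g1 (cone_smul ((p : ℚ) ^ steps σ (σ γ) ((σ ^ nn σ T γ) γ))
      (by positivity) g2)
    convert this using 1
    simp only [fB, hvec, bsimple, inv_self_app]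
    generalize hs' : steps σ (σ γ) ((σ ^ nn σ T γ) γ) = s at e1 ⊢
    have : ((p : ℚ) ^ nn σ T γ) = (p : ℚ) ^ s * p := by rw [← e1, pow_succ]
    rw [this]
    module
  · have hγ := ho (orbit_self β)
    have hσ := tilde_succ hγ hT
    have hs : sameOrbit σ β (σ β) := ⟨1, by simp⟩
    have g1 : hvec σ p β (σ β) ∈ cone (Dgen σ p T) :=
      cone_gen (Or.inl ⟨_, _, hT, Or.inr ⟨β, ⟨hγ, hT⟩, rfl⟩, hs, rfl⟩)
    have g2 : -(bsimple σ p (σ β)) ∈ cone (Dgen σ p T) :=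
      cone_gen (Or.inr ⟨_, hσ, Or.inr rfl⟩)
    set s := steps σ (σ β) β with hsdef
    have := cone_smul (1 + (p : ℚ) ^ s * p)⁻¹ (by positivity)
      (cone_add g1 (cone_smul ((p : ℚ) ^ s) (by positivity) g2))
    convert this using 1
    simp only [hvec, bsimple, inv_self_app, ← hsdef]
    have h0 : (1 + (p : ℚ) ^ s * p) ≠ 0 := by positivity
    rw [eq_inv_smul_iff₀ h0]
    module
  · exact cone_gen (Or.inr h)

theorem path (σ : Equiv.Perm B) (p : ℕ) (T : Set B) (k : ℕ) : ∀ γ : B, γ ∉ tilde σ T → 0 < k →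
    (σ ^ k) γ ∉ tilde σ T → -(e ((σ ^ k) γ)) + ((p : ℚ) ^ k) • e γ ∈ cone (D'gen σ p T) := by
  induction k using Nat.strong_induction_on with
  | _ k ih =>
    intro γ hγ hk h
    obtain ⟨h0, h1, h2⟩ := nn_spec' hk h
    have g : fH σ p T γ ∈ cone (D'gen σ p T) :=
      cone_gen (Or.inl (Or.inl (Or.inl ⟨γ, hγ, rfl⟩)))
    unfold fH at g
    generalize nn σ T γ = n at *
    rcases h2.eq_or_lt with rfl | h2
    · exact g
    · obtain ⟨m, rfl⟩ := Nat.exists_eq_add_of_le' h2.le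
      rw [pow_add, Equiv.Perm.mul_apply] at h ⊢
      have := cone_add (ih m (by omega) _ h1 (by omega) h)
        (cone_smul ((p : ℚ) ^ m) (by positivity) g)
      convert this using 1
      rw [pow_add]
      module

theorem pathB (σ : Equiv.Perm B) (p : ℕ) (T : Set B) (k : ℕ) (γ : B) (hγ : γ ∈ tilde σ T)
    (hT : γ ∉ T) (hk : 0 < k) (h : (σ ^ k) γ ∉ tilde σ T) :
    -(e ((σ ^ k) γ)) - ((p : ℚ) ^ k) • e γ ∈ cone (D'gen σ p T) := by
  obtain ⟨h0, h1, h2⟩ := nn_spec' hk h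
  have g : -(fB σ p T γ) ∈ cone (D'gen σ p T) :=
    cone_gen (Or.inl (Or.inl (Or.inr ⟨γ, hγ, hT, fun h' => h (h' ⟨k, rfl⟩), rfl⟩)))
  unfold fB at g
  generalize nn σ T γ = n at *
  rcases h2.eq_or_lt with rfl | h2
  · convert g using 1; module
  · obtain ⟨m, rfl⟩ := Nat.exists_eq_add_of_le' h2.le
    rw [pow_add, Equiv.Perm.mul_apply] at h ⊢
    have := cone_add (path σ p T m _ h1 (by omega) h)
      (cone_smul ((p : ℚ) ^ m) (by positivity) g)
    convert this using 1
    rw [pow_add]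
    module

theorem pos_e (σ : Equiv.Perm B) (p : ℕ) (hp : p.Prime) (T : Set B) (γ : B) (hγ : γ ∉ tilde σ T) :
    e γ ∈ cone (D'gen σ p T) := by
  have ho : 0 < orderOf σ := orderOf_pos σ
  have h := path σ p T (orderOf σ) γ hγ ho (by rw [pow_orderOf_eq_one]; simpa using hγ)
  rw [pow_orderOf_eq_one, Equiv.Perm.one_apply] at h
  have h1 : (1 : ℚ) < (p : ℚ) ^ orderOf σ :=
    one_lt_pow₀ (by exact_mod_cast hp.one_lt) ho.ne'
  have h2 : 0 < (p : ℚ) ^ orderOf σ - 1 := by linarith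
  have := cone_smul ((p : ℚ) ^ orderOf σ - 1)⁻¹ (by positivity) h
  convert this using 1
  rw [eq_inv_smul_iff₀ h2.ne']
  module

theorem neg_e (σ : Equiv.Perm B) (p : ℕ) (hp : p.Prime) (T : Set B) (γ : B) (hγ : γ ∈ tilde σ T)
    (hT : γ ∉ T) : -(e γ) ∈ cone (D'gen σ p T) := by
  by_cases ho : orbit σ γ ⊆ tilde σ T
  · exact cone_gen (Or.inl (Or.inr ⟨γ, hT, ho, rfl⟩))
  · obtain ⟨h0, h1⟩ := nn_spec ho
    have hpp : 0 < (p : ℚ) ^ nn σ T γ := pow_pos (by exact_mod_cast hp.pos) _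
    have := cone_smul ((p : ℚ) ^ nn σ T γ)⁻¹ (by positivity)
      (cone_add (pathB σ p T _ γ hγ hT h0 h1) (pos_e σ p hp T _ h1))
    convert this using 1
    rw [eq_inv_smul_iff₀ hpp.ne']
    module

theorem gen2 (σ : Equiv.Perm B) (p : ℕ) (hp : p.Prime) (T : Set B) (x : B → ℚ)
    (hx : x ∈ Dgen σ p T) : x ∈ cone (D'gen σ p T) := by
  rcases hx with ⟨β, β', hT, hβ', hs, rfl⟩ | h
  · obtain ⟨s0, s1⟩ := steps_spec hs
    unfold hvec
    generalize steps σ β' β = s at *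
    rcases hβ' with hβ' | ⟨γ, ⟨hγ, hγT⟩, rfl⟩
    · by_cases hβ : β ∈ tilde σ T
      · exact cone_add (neg_e σ p hp T β hβ hT)
          (cone_smul _ (by positivity) (pos_e σ p hp T _ hβ'))
      · subst s1
        exact path σ p T s β' hβ' s0 hβ
    · have hσ := tilde_succ hγ hγT
      have g : bsimple σ p (σ γ) ∈ cone (D'gen σ p T) := cone_gen (Or.inr ⟨_, hσ, Or.inl rfl⟩)
      have key : -(e β) - ((p : ℚ) ^ (s + 1)) • e γ ∈ cone (D'gen σ p T) := by
        by_cases hβ : β ∈ tilde σ T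
        · have := cone_add (neg_e σ p hp T β hβ hT)
            (cone_smul ((p : ℚ) ^ (s + 1)) (by positivity) (neg_e σ p hp T _ hγ hγT))
          convert this using 1
          module
        · have s2 : (σ ^ (s + 1)) γ = β := by rw [pow_succ, Equiv.Perm.mul_apply, s1]
          subst s2
          exact pathB σ p T (s + 1) γ hγ hγT (by omega) hβ
      have := cone_add key (cone_smul ((p : ℚ) ^ s) (by positivity) g)
      convert this using 1
      simp only [bsimple, inv_self_app, pow_succ]
      module
  · exact cone_gen (Or.inr h)

end

end GO

/-- For every subset `T ⊆ 𝔹`, the cones `𝒟′_T` and `𝒟_T` coincide. -/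
theorem statement0 {B : Type*} [Fintype B] [DecidableEq B] [Nonempty B]
    (σ : Equiv.Perm B) (p : ℕ) (hp : p.Prime) (T : Set B) :
    GO.D' σ p T = GO.D σ p T := by
  exact Set.Subset.antisymm (GO.cone_sub (GO.gen1 σ p T)) (GO.cone_sub (GO.gen2 σ p hp T))
end

section
/- For every T ⊆ 𝔹, the family {g_β : β ∈ 𝔹} is a basis of the ℚ-vector space ℚ^𝔹. -/
/- Setting: `B` is the finite nonempty set 𝔹 equipped with a permutation `σ` (Frobenius),
and `p` is a prime.  Weights live in `ℚ^𝔹 = (B → ℚ)`.  The orbits `𝔹_𝔭` of `σ` are the sets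
`orbit σ β`, and for `T ⊆ 𝔹` we have `T_𝔭 = T ∩ orbit σ β`. -/

open scoped Classical

theorem statement3_aux {B : Type*} [Fintype B] [DecidableEq B]
    (σ : Equiv.Perm B) (p : ℕ) (hp : p.Prime) (T : Set B)
    (f : (B → ℚ) →ₗ[ℚ] ℚ) (hf : ∀ β, f (GO.gvec σ p T β) = 0) (β : B) :
    f (GO.e β) = 0 := by
  have hp2 : (2 : ℚ) ≤ p := by exact_mod_cast hp.two_le
  have hT : ∀ β, β ∉ GO.tilde σ T → β ∉ T := fun β h h' => h (Or.inl h')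
  have h1 : ∀ β, β ∉ T → f (GO.e β) = 0 := by
    by_contra! hcon
    obtain ⟨β₀, h₀, h₀'⟩ := hcon
    obtain ⟨b, hb, hmax⟩ := Finset.exists_max_image
      (Finset.univ.filter (fun β => β ∉ T)) (fun β => |f (GO.e β)|) ⟨β₀, by simpa using h₀⟩
    simp only [Finset.mem_filter, Finset.mem_univ, true_and] at hb hmax
    have hbpos : 0 < |f (GO.e b)| := lt_of_lt_of_le (abs_pos.mpr h₀') (hmax β₀ h₀)
    have hg := hf b
    by_cases ho : GO.orbit σ b ⊆ GO.tilde σ T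
    · rw [GO.gvec, if_neg hb, if_pos ho, map_neg, neg_eq_zero] at hg
      rw [hg] at hbpos
      simp at hbpos
    · have hne : {i : ℕ | 0 < i ∧ (σ ^ i) b ∉ GO.tilde σ T}.Nonempty := by
        rw [Set.not_subset] at ho
        obtain ⟨c, ⟨m, hm⟩, hc⟩ := ho
        refine ⟨m + orderOf σ, ?_, ?_⟩
        · have := orderOf_pos σ
          omega
        · rw [pow_add, pow_orderOf_eq_one, mul_one, hm]
          exact hc
      have hmem := Nat.sInf_mem hne
      obtain ⟨hn, hnt⟩ := hmem
      change 0 < GO.nn σ T b at hn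
      change (σ ^ GO.nn σ T b) b ∉ GO.tilde σ T at hnt
      have hle := hmax _ (hT _ hnt)
      have habs : |f (GO.e ((σ ^ GO.nn σ T b) b))| = (p : ℚ) ^ GO.nn σ T b * |f (GO.e b)| := by
        have hpp : (0 : ℚ) ≤ (p : ℚ) ^ GO.nn σ T b := by positivity
        rw [← abs_of_nonneg hpp, ← abs_mul]
        by_cases ht : b ∈ GO.tilde σ T
        · rw [GO.gvec, if_neg hb, if_neg ho, if_pos ht, GO.fB, map_neg, map_add, map_smul,
            smul_eq_mul] at hg
          rw [← abs_neg]
          congr 1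
          linarith
        · rw [GO.gvec, if_neg hb, if_neg ho, if_neg ht, GO.fH, map_add, map_neg, map_smul,
            smul_eq_mul] at hg
          congr 1
          linarith
      have hpow : (1 : ℚ) < (p : ℚ) ^ GO.nn σ T b := one_lt_pow₀ (by linarith) (by omega)
      nlinarith
  by_contra hcon
  obtain ⟨b, hb, hmin⟩ := Finset.exists_min_image
      (Finset.univ.filter (fun β => f (GO.e β) ≠ 0)) (fun β => |f (GO.e β)|)
      ⟨β, by simpa using hcon⟩
  simp only [Finset.mem_filter, Finset.mem_univ, true_and] at hb hmin
  have hbT : b ∈ T := by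
    by_contra h
    exact hb (h1 b h)
  have hg := hf b
  rw [GO.gvec, if_pos hbT, GO.bsimple, map_add, map_smul, smul_eq_mul] at hg
  have heq : f (GO.e b) = -(p * f (GO.e (σ⁻¹ b))) := by linarith
  have hne : f (GO.e (σ⁻¹ b)) ≠ 0 := by
    intro h
    rw [h] at heq
    exact hb (by simpa using heq)
  have hle := hmin _ hne
  rw [heq, abs_neg, abs_mul, Nat.abs_cast] at hle
  have := abs_pos.mpr hne
  nlinarith

/-- For every `T ⊆ 𝔹`, the family `{g_β : β ∈ 𝔹}` is a basis of `ℚ^𝔹`. -/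
theorem statement3 {B : Type*} [Fintype B] [DecidableEq B] [Nonempty B]
    (σ : Equiv.Perm B) (p : ℕ) (hp : p.Prime) (T : Set B) :
    LinearIndependent ℚ (GO.gvec σ p T) ∧
    Submodule.span ℚ (Set.range (GO.gvec σ p T)) = ⊤ := by
  have hspan : Submodule.span ℚ (Set.range (GO.gvec σ p T)) = ⊤ := by
    by_contra hne
    obtain ⟨f, hf0, hf⟩ := Submodule.exists_le_ker_of_lt_top _ (lt_top_iff_ne_top.mpr hne)
    apply hf0
    have h := statement3_aux σ p hp T f
      (fun β => hf (Submodule.subset_span (Set.mem_range_self β)))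
    refine LinearMap.pi_ext' (fun β => LinearMap.ext_ring ?_)
    have he : (Pi.single β (1 : ℚ) : B → ℚ) = GO.e β := by
      funext τ
      simp [GO.e, Pi.single_apply]
    simp [he, h β]
  exact ⟨linearIndependent_of_top_le_span_of_card_eq_finrank hspan.ge (by simp), hspan⟩
end
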